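/- Let n ≥ 2, let γ be a real symmetric n×n matrix, ℓ ∈ ℝⁿ a nonzero vector with γℓ = 0, λ a nonzero real number, and b ∈ ℝⁿ a vector such that G = λγ − b bᵀ is invertible. Then bᵀℓ ≠ 0, G⁻¹ b = −(bᵀℓ)⁻¹ ℓ, and λ · tr(G⁻¹ γ) = n − 1. -/

import Mathlib

open Matrix

/-!
If `A w = 0`, then `G = A - u vᵀ` sends `w` to `-(vᵀw) u`. Invertibility of `G` therefore forces
`vᵀw ≠ 0` when `w ≠ 0`, and determines `G⁻¹ u`. Since `A = G + u vᵀ`, the trace of `G⁻¹ A` is that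
of the identity plus `vᵀ G⁻¹ u`, which equals `-1`.
-/

section CommRing

variable {m n R : Type*} [Fintype n] [CommRing R]

lemma sub_vecMulVec_mulVec_of_mulVec_eq_zero {A : Matrix m n R} {w : n → R} (hw : A *ᵥ w = 0)
    (u : m → R) (v : n → R) : (A - vecMulVec u v) *ᵥ w = -(v ⬝ᵥ w) • u := by
  rw [sub_mulVec, hw, vecMulVec_mulVec, op_smul_eq_smul, zero_sub, neg_smul]

variable [DecidableEq n] {A : Matrix n n R} {u v w : n → R}

lemma dotProduct_ne_zero_of_isUnit_sub_vecMulVec (hG : IsUnit (A - vecMulVec u v))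
    (hAw : A *ᵥ w = 0) (hw : w ≠ 0) : v ⬝ᵥ w ≠ 0 := by
  intro hvw
  apply hw
  apply mulVec_injective_of_isUnit hG
  rw [sub_vecMulVec_mulVec_of_mulVec_eq_zero hAw, hvw, neg_zero, zero_smul, mulVec_zero]

lemma trace_inv_sub_vecMulVec_mul (hG : IsUnit (A - vecMulVec u v)) :
    trace ((A - vecMulVec u v)⁻¹ * A) =
      Fintype.card n + v ⬝ᵥ (A - vecMulVec u v)⁻¹ *ᵥ u := by
  have hdet := (isUnit_iff_isUnit_det _).mp hG
  calc
    trace ((A - vecMulVec u v)⁻¹ * A)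
        = trace ((A - vecMulVec u v)⁻¹ * ((A - vecMulVec u v) + vecMulVec u v)) := by
          rw [sub_add_cancel]
    _ = Fintype.card n + v ⬝ᵥ (A - vecMulVec u v)⁻¹ *ᵥ u := by
          rw [Matrix.mul_add, nonsing_inv_mul _ hdet, trace_add, trace_one, mul_vecMulVec,
            trace_vecMulVec, dotProduct_comm]

end CommRing

section Field

variable {n K : Type*} [Fintype n] [DecidableEq n] [Field K] {A : Matrix n n K} {u v w : n → K}

lemma inv_sub_vecMulVec_mulVec_of_mulVec_eq_zero (hG : IsUnit (A - vecMulVec u v))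
    (hAw : A *ᵥ w = 0) (hvw : v ⬝ᵥ w ≠ 0) :
    (A - vecMulVec u v)⁻¹ *ᵥ u = -(v ⬝ᵥ w)⁻¹ • w := by
  have hdet := (isUnit_iff_isUnit_det _).mp hG
  apply mulVec_injective_of_isUnit hG
  rw [mulVec_mulVec, mul_nonsing_inv _ hdet, one_mulVec, mulVec_smul,
    sub_vecMulVec_mulVec_of_mulVec_eq_zero hAw, smul_smul, neg_mul_neg, inv_mul_cancel₀ hvw,
    one_smul]

theorem stmt_10_general (hG : IsUnit (A - vecMulVec u v)) (hAw : A *ᵥ w = 0) (hw : w ≠ 0) :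
    v ⬝ᵥ w ≠ 0 ∧
    (A - vecMulVec u v)⁻¹ *ᵥ u = -(v ⬝ᵥ w)⁻¹ • w ∧
    trace ((A - vecMulVec u v)⁻¹ * A) = (Fintype.card n : K) - 1 := by
  have hvw : v ⬝ᵥ w ≠ 0 := dotProduct_ne_zero_of_isUnit_sub_vecMulVec hG hAw hw
  have hinv := inv_sub_vecMulVec_mulVec_of_mulVec_eq_zero hG hAw hvw
  refine ⟨hvw, hinv, ?_⟩
  rw [trace_inv_sub_vecMulVec_mul hG, hinv, dotProduct_smul, smul_eq_mul, neg_mul,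
    inv_mul_cancel₀ hvw, sub_eq_add_neg]

end Field

/-- For a degenerate symmetric matrix `γ` with null vector `ℓ ≠ 0` and an invertible
auxiliary matrix `G = λγ − b bᵀ`, one has `bᵀℓ ≠ 0`, `G⁻¹ b = −(bᵀℓ)⁻¹ ℓ`, and
`λ tr(G⁻¹ γ) = n − 1`. -/
theorem stmt_10 (n : ℕ) (hn : 2 ≤ n)
    (γ : Matrix (Fin n) (Fin n) ℝ) (hγ : γ.IsSymm)
    (ℓ : Fin n → ℝ) (hℓ : ℓ ≠ 0) (hγℓ : γ.mulVec ℓ = 0)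
    (lam : ℝ) (hlam : lam ≠ 0) (b : Fin n → ℝ)
    (hG : IsUnit (lam • γ - vecMulVec b b)) :
    b ⬝ᵥ ℓ ≠ 0 ∧
    (lam • γ - vecMulVec b b)⁻¹.mulVec b = (-(b ⬝ᵥ ℓ)⁻¹) • ℓ ∧
    lam * Matrix.trace ((lam • γ - vecMulVec b b)⁻¹ * γ) = (n : ℝ) - 1 := by
  have hA : (lam • γ) *ᵥ ℓ = 0 := by rw [smul_mulVec, hγℓ, smul_zero]
  simpa using stmt_10_general hG hA hℓ
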